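/- arXiv:1710.05161 — 12 statements merged into one kernel-verified Lean document; each statement's English description precedes it below -/
import Mathlib

section
/- Let C be a coalgebra over a field K and let γ ∈ K. If (C, Q) is a Rota-Baxter coalgebra of weight γ, then both (C, Q, Q + γ·id_C) and (C, Q + γ·id_C, Q) are Rota-Baxter cosystems. -/
open TensorProduct

noncomputable section

variable {K : Type*} [Field K] {C : Type*} [AddCommGroup C] [Module K C]

/-- Coassociativity of a comultiplication (no counit assumed). -/
def Coassoc (Δ : C →ₗ[K] C ⊗[K] C) : Prop :=
  ∀ c : C, (TensorProduct.assoc K C C C) (TensorProduct.map Δ LinearMap.id (Δ c)) =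
    TensorProduct.map LinearMap.id Δ (Δ c)

/-- Rota-Baxter cosystem conditions. -/
def IsRBCosystem (Δ : C →ₗ[K] C ⊗[K] C) (Q T : C →ₗ[K] C) : Prop :=
  (∀ c : C, TensorProduct.map Q Q (Δ c) =
      TensorProduct.map Q LinearMap.id (Δ (Q c)) +
      TensorProduct.map LinearMap.id T (Δ (Q c))) ∧
  (∀ c : C, TensorProduct.map T T (Δ c) =
      TensorProduct.map Q LinearMap.id (Δ (T c)) +
      TensorProduct.map LinearMap.id T (Δ (T c)))

/-- Non-degeneracy of a coalgebra. -/
def Nondegenerate (Δ : C →ₗ[K] C ⊗[K] C) : Prop :=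
  ∀ f : C →ₗ[K] C,
    ((∀ c : C, TensorProduct.map LinearMap.id f (Δ c) = 0) ∨
     (∀ c : C, TensorProduct.map f LinearMap.id (Δ c) = 0)) → f = 0

/-- `pairApply f g (x ⊗ y) = f x * g y`. -/
def pairApply (f g : C →ₗ[K] K) : C ⊗[K] C →ₗ[K] K :=
  TensorProduct.lift ((LinearMap.mul K K).compl₁₂ f g)

/-- Coassociative Yang–Baxter pair. -/
def IsCYBP (Δ : C →ₗ[K] C ⊗[K] C) (σ τ : C →ₗ[K] C →ₗ[K] K) : Prop :=
  (∀ c d e : C, pairApply (σ.flip e) (σ.flip d) (Δ c)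
      - pairApply (σ c) (σ.flip e) (Δ d) + pairApply (τ d) (σ c) (Δ e) = 0) ∧
  (∀ c d e : C, pairApply (τ.flip e) (σ.flip d) (Δ c)
      - pairApply (τ c) (τ.flip e) (Δ d) + pairApply (τ d) (τ c) (Δ e) = 0)

/-- Swap of the first two tensor factors of `C ⊗ (C ⊗ C)`. -/
def swapFirstTwo : C ⊗[K] (C ⊗[K] C) →ₗ[K] C ⊗[K] (C ⊗[K] C) :=
  (TensorProduct.assoc K C C C).toLinearMap ∘ₗ
    LinearMap.rTensor C (TensorProduct.comm K C C).toLinearMap ∘ₗ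
    (TensorProduct.assoc K C C C).symm.toLinearMap

/-- `contract13 σ (x ⊗ (y ⊗ z)) = σ x z • y`. -/
def contract13 (σ : C →ₗ[K] C →ₗ[K] K) : C ⊗[K] (C ⊗[K] C) →ₗ[K] C :=
  (TensorProduct.rid K C).toLinearMap ∘ₗ
    LinearMap.lTensor C (TensorProduct.lift σ) ∘ₗ swapFirstTwo

/-- `muForm Δ σ τ (c ⊗ d) = σ(c₂,d) • c₁ − τ(c,d₁) • d₂`. -/
def muForm (Δ : C →ₗ[K] C ⊗[K] C) (σ τ : C →ₗ[K] C →ₗ[K] K) :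
    C ⊗[K] C →ₗ[K] C :=
  ((TensorProduct.rid K C).toLinearMap ∘ₗ
      LinearMap.lTensor C (TensorProduct.lift σ) ∘ₗ
      (TensorProduct.assoc K C C C).toLinearMap ∘ₗ LinearMap.rTensor C Δ)
  - ((TensorProduct.lid K C).toLinearMap ∘ₗ
      LinearMap.rTensor C (TensorProduct.lift τ) ∘ₗ
      (TensorProduct.assoc K C C C).symm.toLinearMap ∘ₗ LinearMap.lTensor C Δ)

/-- Coderivation condition for a multiplication-like map on a coalgebra. -/
def IsCoderivation (Δ : C →ₗ[K] C ⊗[K] C) (δ : C ⊗[K] C →ₗ[K] C) : Prop :=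
  ∀ c d : C, Δ (δ (c ⊗ₜ d)) =
    LinearMap.lTensor C (δ ∘ₗ (TensorProduct.mk K C C).flip d) (Δ c) +
    LinearMap.rTensor C (δ ∘ₗ TensorProduct.mk K C C c) (Δ d)

/-- Covariant coderivation with respect to `(δ₁, δ₂)`. -/
def IsCovariant (Δ : C →ₗ[K] C ⊗[K] C) (δ₁ δ₂ μ : C ⊗[K] C →ₗ[K] C) : Prop :=
  (∀ c d : C, Δ (μ (c ⊗ₜ d)) =
      LinearMap.rTensor C (μ ∘ₗ TensorProduct.mk K C C c) (Δ d) +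
      LinearMap.lTensor C (δ₁ ∘ₗ (TensorProduct.mk K C C).flip d) (Δ c)) ∧
  (∀ c d : C, Δ (μ (c ⊗ₜ d)) =
      LinearMap.lTensor C (μ ∘ₗ (TensorProduct.mk K C C).flip d) (Δ c) +
      LinearMap.rTensor C (δ₂ ∘ₗ TensorProduct.mk K C C c) (Δ d))

/-- Associativity of a multiplication `μ : C ⊗ C →ₗ C`. -/
def IsAssocMul (μ : C ⊗[K] C →ₗ[K] C) : Prop :=
  ∀ c d e : C, μ (μ (c ⊗ₜ d) ⊗ₜ e) = μ (c ⊗ₜ μ (d ⊗ₜ e))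

/-- Counit condition. -/
def IsCounit (Δ : C →ₗ[K] C ⊗[K] C) (ε : C →ₗ[K] K) : Prop :=
  ∀ c : C, (TensorProduct.lid K C) (TensorProduct.map ε LinearMap.id (Δ c)) = c ∧
    (TensorProduct.rid K C) (TensorProduct.map LinearMap.id ε (Δ c)) = c

/-- Dendriform coalgebra conditions for `(Δr, Δl) = (Δ_≻, Δ_≺)`. -/
def IsDendriformCoalgebra (Δr Δl : C →ₗ[K] C ⊗[K] C) : Prop :=
  (∀ c : C, (TensorProduct.assoc K C C C) (TensorProduct.map Δr LinearMap.id (Δr c)) =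
      TensorProduct.map LinearMap.id Δr (Δr c) + TensorProduct.map LinearMap.id Δl (Δr c)) ∧
  (∀ c : C, (TensorProduct.assoc K C C C) (TensorProduct.map Δl LinearMap.id (Δr c)) =
      TensorProduct.map LinearMap.id Δr (Δl c)) ∧
  (∀ c : C, (TensorProduct.assoc K C C C) (TensorProduct.map Δr LinearMap.id (Δl c)) +
      (TensorProduct.assoc K C C C) (TensorProduct.map Δl LinearMap.id (Δl c)) =
      TensorProduct.map LinearMap.id Δl (Δl c))

/-- The conditions on the bilinear form `u` in Theorem 4.11. -/
def UCond (Δ : C →ₗ[K] C ⊗[K] C) (δ₁ δ₂ : C ⊗[K] C →ₗ[K] C)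
    (u : C →ₗ[K] C →ₗ[K] K) : Prop :=
  (∀ c d : C, δ₁ (c ⊗ₜ d) - δ₂ (c ⊗ₜ d) =
      (TensorProduct.rid K C) (LinearMap.lTensor C (u.flip d) (Δ c)) -
      (TensorProduct.lid K C) (LinearMap.rTensor C (u c) (Δ d))) ∧
  (∀ c d e : C, δ₁ (δ₁ (c ⊗ₜ d) ⊗ₜ e) - δ₁ (c ⊗ₜ δ₁ (d ⊗ₜ e)) =
      (TensorProduct.lid K C)
        (TensorProduct.map (u d) (δ₁ ∘ₗ TensorProduct.mk K C C c) (Δ e))) ∧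
  (∀ c d e : C, u (δ₁ (c ⊗ₜ d)) e - u c (δ₁ (d ⊗ₜ e)) =
      pairApply (u d) (u c) (Δ e) - pairApply (u c) (u.flip e) (Δ d))

/-- If `(C, Q)` is a Rota-Baxter coalgebra of weight `γ`, then
`(C, Q, Q + γ·id)` and `(C, Q + γ·id, Q)` are Rota-Baxter cosystems. -/
theorem rotaBaxterCoalgebra_gives_cosystems
    (Δ : C →ₗ[K] C ⊗[K] C) (hΔ : Coassoc Δ) (γ : K) (Q : C →ₗ[K] C)
    (hRB : ∀ c : C, TensorProduct.map Q Q (Δ c) =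
      TensorProduct.map LinearMap.id Q (Δ (Q c)) +
      TensorProduct.map Q LinearMap.id (Δ (Q c)) + γ • Δ (Q c)) :
    IsRBCosystem Δ Q (Q + γ • (LinearMap.id : C →ₗ[K] C)) ∧
    IsRBCosystem Δ (Q + γ • (LinearMap.id : C →ₗ[K] C)) Q := by
  refine ⟨⟨fun c => ?_, fun c => ?_⟩, ⟨fun c => ?_, fun c => ?_⟩⟩ <;>
  simp only [TensorProduct.map_add_left, TensorProduct.map_add_right,
    TensorProduct.map_smul_left, TensorProduct.map_smul_right, TensorProduct.map_id,
    LinearMap.add_apply, LinearMap.smul_apply, LinearMap.id_apply, map_add, map_smul,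
    smul_add, hRB] <;>
  module

end
end

section
/- Let C be a coalgebra over a field K, let Q : C → C be a left C-colinear map (i.e. Δ∘Q = (id⊗Q)∘Δ) and let T : C → C be a right C-colinear map (i.e. Δ∘T = (T⊗id)∘Δ). Then (C, Q, T) is a Rota-Baxter cosystem if and only if, for all c ∈ C, c₁ ⊗ (T∘Q)(c₂) = 0 and (Q∘T)(c₁) ⊗ c₂ = 0. -/
open TensorProduct

noncomputable section

variable {K : Type*} [Field K] {C : Type*} [AddCommGroup C] [Module K C]

/-- For `Q` left colinear and `T` right colinear, `(C, Q, T)` is a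
Rota-Baxter cosystem iff `c₁ ⊗ (T∘Q)(c₂) = 0` and `(Q∘T)(c₁) ⊗ c₂ = 0` for all `c`. -/
theorem cosystem_iff_orthogonality_pointwise
    (Δ : C →ₗ[K] C ⊗[K] C) (hΔ : Coassoc Δ) (Q T : C →ₗ[K] C)
    (hQ : ∀ c : C, Δ (Q c) = TensorProduct.map LinearMap.id Q (Δ c))
    (hT : ∀ c : C, Δ (T c) = TensorProduct.map T LinearMap.id (Δ c)) :
    IsRBCosystem Δ Q T ↔
      ∀ c : C, TensorProduct.map LinearMap.id (T ∘ₗ Q) (Δ c) = 0 ∧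
        TensorProduct.map (Q ∘ₗ T) LinearMap.id (Δ c) = 0 := by
  have e1 : ∀ c, TensorProduct.map Q LinearMap.id (Δ (Q c)) = TensorProduct.map Q Q (Δ c) := by
    intro c
    rw [hQ, ← LinearMap.comp_apply, ← TensorProduct.map_comp, LinearMap.comp_id, LinearMap.id_comp]
  have e2 : ∀ c, TensorProduct.map LinearMap.id T (Δ (Q c)) =
      TensorProduct.map LinearMap.id (T ∘ₗ Q) (Δ c) := by
    intro c
    rw [hQ, ← LinearMap.comp_apply, ← TensorProduct.map_comp, LinearMap.id_comp]
  have e3 : ∀ c, TensorProduct.map Q LinearMap.id (Δ (T c)) =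
      TensorProduct.map (Q ∘ₗ T) LinearMap.id (Δ c) := by
    intro c
    rw [hT, ← LinearMap.comp_apply, ← TensorProduct.map_comp, LinearMap.id_comp]
  have e4 : ∀ c, TensorProduct.map LinearMap.id T (Δ (T c)) = TensorProduct.map T T (Δ c) := by
    intro c
    rw [hT, ← LinearMap.comp_apply, ← TensorProduct.map_comp, LinearMap.comp_id, LinearMap.id_comp]
  unfold IsRBCosystem
  simp only [e1, e2, e3, e4, left_eq_add, right_eq_add]
  exact forall_and.symm

end
end

section
/- Let C be a non-degenerate coalgebra over a field K, let Q : C → C be a left C-colinear map (Δ∘Q = (id⊗Q)∘Δ) and let T : C → C be a right C-colinear map (Δ∘T = (T⊗id)∘Δ). Then (C, Q, T) is a Rota-Baxter cosystem if and only if T∘Q = 0 and Q∘T = 0. -/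
open TensorProduct

noncomputable section

variable {K : Type*} [Field K] {C : Type*} [AddCommGroup C] [Module K C]

/-- On a non-degenerate coalgebra, with `Q` left colinear and `T`
right colinear, `(C, Q, T)` is a Rota-Baxter cosystem iff `T∘Q = 0` and `Q∘T = 0`. -/
theorem cosystem_iff_orthogonality
    (Δ : C →ₗ[K] C ⊗[K] C) (hΔ : Coassoc Δ) (hnd : Nondegenerate Δ)
    (Q T : C →ₗ[K] C)
    (hQ : ∀ c : C, Δ (Q c) = TensorProduct.map LinearMap.id Q (Δ c))
    (hT : ∀ c : C, Δ (T c) = TensorProduct.map T LinearMap.id (Δ c)) :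
    IsRBCosystem Δ Q T ↔ (T ∘ₗ Q = 0 ∧ Q ∘ₗ T = 0) := by
  have m : ∀ (f g f' g' : C →ₗ[K] C) (x : C ⊗[K] C),
      TensorProduct.map f g (TensorProduct.map f' g' x) =
        TensorProduct.map (f ∘ₗ f') (g ∘ₗ g') x := fun f g f' g' x => by
    rw [TensorProduct.map_comp]; rfl
  have h1 : (∀ c : C, TensorProduct.map Q Q (Δ c) =
      TensorProduct.map Q LinearMap.id (Δ (Q c)) +
      TensorProduct.map LinearMap.id T (Δ (Q c))) ↔
      ∀ c : C, TensorProduct.map LinearMap.id (T ∘ₗ Q) (Δ c) = 0 := by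
    refine forall_congr' fun c => ?_
    rw [hQ, m, m, LinearMap.comp_id, LinearMap.id_comp, LinearMap.comp_id, left_eq_add]
  have h2 : (∀ c : C, TensorProduct.map T T (Δ c) =
      TensorProduct.map Q LinearMap.id (Δ (T c)) +
      TensorProduct.map LinearMap.id T (Δ (T c))) ↔
      ∀ c : C, TensorProduct.map (Q ∘ₗ T) LinearMap.id (Δ c) = 0 := by
    refine forall_congr' fun c => ?_
    rw [hT, m, m, LinearMap.comp_id, LinearMap.id_comp, LinearMap.comp_id, right_eq_add]
  unfold IsRBCosystem
  rw [h1, h2]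
  constructor
  · rintro ⟨a, b⟩
    exact ⟨hnd _ (Or.inl a), hnd _ (Or.inr b)⟩
  · rintro ⟨a, b⟩
    rw [a, b]
    simp

end
end

section
/- Let C be a coalgebra over a field K and let σ, τ : C → K be linear functionals such that σ(c₁)τ(c₂) = 0 and σ(c₁)c₂ = c₁σ(c₂) for all c ∈ C. Define Q, T : C → C by Q(c) = c₁σ(c₂) and T(c) = τ(c₁)c₂. Then (C, Q, T) is a Rota-Baxter cosystem. -/
open TensorProduct

noncomputable section

variable {K : Type*} [Field K] {C : Type*} [AddCommGroup C] [Module K C]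

theorem aux_right (Δ : C →ₗ[K] C ⊗[K] C) (hΔ : Coassoc Δ) (σ : C →ₗ[K] K) (Q : C →ₗ[K] C)
    (hQ : ∀ c : C, Q c = (TensorProduct.rid K C) (TensorProduct.map LinearMap.id σ (Δ c)))
    (c : C) : Δ (Q c) = TensorProduct.map LinearMap.id Q (Δ c) := by
  have e : Q = ((TensorProduct.rid K C).toLinearMap ∘ₗ TensorProduct.map LinearMap.id σ) ∘ₗ Δ := by
    ext x; simp [hQ]
  have e2 : TensorProduct.map LinearMap.id Q (Δ c) = TensorProduct.map LinearMap.id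
      ((TensorProduct.rid K C).toLinearMap ∘ₗ TensorProduct.map LinearMap.id σ)
      (TensorProduct.map LinearMap.id Δ (Δ c)) := by
    rw [← LinearMap.comp_apply (TensorProduct.map _ _) (TensorProduct.map _ _), ← TensorProduct.map_comp, LinearMap.id_comp, ← e]
  have key : ∀ (s : C ⊗[K] C) (b : C), TensorProduct.map LinearMap.id
      ((TensorProduct.rid K C).toLinearMap ∘ₗ TensorProduct.map LinearMap.id σ)
      (TensorProduct.assoc K C C C (s ⊗ₜ[K] b)) = σ b • s := by
    intro s b
    induction s using TensorProduct.induction_on with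
    | zero => simp
    | tmul x y => simp
    | add x y hx hy => simp only [TensorProduct.add_tmul, map_add, hx, hy, smul_add]
  rw [e2, ← hΔ c, hQ]
  induction Δ c using TensorProduct.induction_on with
  | zero => simp
  | tmul x y => rw [TensorProduct.map_tmul, TensorProduct.map_tmul, LinearMap.id_apply, LinearMap.id_apply, key]; simp
  | add x y hx hy => simp only [map_add, hx, hy]

theorem aux_left (Δ : C →ₗ[K] C ⊗[K] C) (hΔ : Coassoc Δ) (τ : C →ₗ[K] K) (T : C →ₗ[K] C)
    (hT : ∀ c : C, T c = (TensorProduct.lid K C) (TensorProduct.map τ LinearMap.id (Δ c)))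
    (c : C) : Δ (T c) = TensorProduct.map T LinearMap.id (Δ c) := by
  have e : T = ((TensorProduct.lid K C).toLinearMap ∘ₗ TensorProduct.map τ LinearMap.id) ∘ₗ Δ := by
    ext x; simp [hT]
  have e2 : TensorProduct.map T LinearMap.id (Δ c) = TensorProduct.map
      ((TensorProduct.lid K C).toLinearMap ∘ₗ TensorProduct.map τ LinearMap.id) LinearMap.id
      (TensorProduct.map Δ LinearMap.id (Δ c)) := by
    rw [← LinearMap.comp_apply (TensorProduct.map _ _) (TensorProduct.map _ _), ← TensorProduct.map_comp, LinearMap.id_comp, ← e]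
  have key : ∀ (s : C ⊗[K] C) (b : C), TensorProduct.map
      ((TensorProduct.lid K C).toLinearMap ∘ₗ TensorProduct.map τ LinearMap.id) LinearMap.id
      ((TensorProduct.assoc K C C C).symm (b ⊗ₜ[K] s)) = τ b • s := by
    intro s b
    induction s using TensorProduct.induction_on with
    | zero => simp
    | tmul x y => simp [TensorProduct.smul_tmul']
    | add x y hx hy => simp only [TensorProduct.tmul_add, map_add, hx, hy, smul_add]
  have h3 := (LinearEquiv.eq_symm_apply _).2 (hΔ c)
  rw [e2, h3, hT]
  induction Δ c using TensorProduct.induction_on with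
  | zero => simp
  | tmul x y => rw [TensorProduct.map_tmul, TensorProduct.map_tmul, LinearMap.id_apply, LinearMap.id_apply, key]; simp
  | add x y hx hy => simp only [map_add, hx, hy]

/-- For functionals `σ, τ` with `σ(c₁)τ(c₂) = 0` and
`σ(c₁)c₂ = c₁σ(c₂)`, the maps `Q(c) = c₁σ(c₂)` and `T(c) = τ(c₁)c₂` give a
Rota-Baxter cosystem. -/
theorem cosystem_from_functionals
    (Δ : C →ₗ[K] C ⊗[K] C) (hΔ : Coassoc Δ) (σ τ : C →ₗ[K] K)
    (h1 : ∀ c : C, pairApply σ τ (Δ c) = 0)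
    (h2 : ∀ c : C, (TensorProduct.lid K C) (TensorProduct.map σ LinearMap.id (Δ c)) =
      (TensorProduct.rid K C) (TensorProduct.map LinearMap.id σ (Δ c)))
    (Q T : C →ₗ[K] C)
    (hQ : ∀ c : C, Q c = (TensorProduct.rid K C) (TensorProduct.map LinearMap.id σ (Δ c)))
    (hT : ∀ c : C, T c = (TensorProduct.lid K C) (TensorProduct.map τ LinearMap.id (Δ c))) :
    IsRBCosystem Δ Q T := by
  have hQ' : ∀ c : C, Q c = (TensorProduct.lid K C) (TensorProduct.map σ LinearMap.id (Δ c)) :=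
    fun c => by rw [hQ, h2]
  have r := aux_right Δ hΔ σ Q hQ
  have l := aux_left Δ hΔ σ Q hQ'
  have lT := aux_left Δ hΔ τ T hT
  have tq : τ ∘ₗ Q = 0 := by
    ext c
    rw [LinearMap.comp_apply, hQ', LinearMap.zero_apply, ← h1 c]
    induction Δ c using TensorProduct.induction_on with
    | zero => simp
    | tmul x y => simp [pairApply]
    | add x y hx hy => simp only [map_add, hx, hy]
  have st : σ ∘ₗ T = 0 := by
    ext c
    have h : τ (Q c) = 0 := LinearMap.congr_fun tq c
    rw [LinearMap.comp_apply, hT, LinearMap.zero_apply, ← h, hQ]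
    induction Δ c using TensorProduct.induction_on with
    | zero => simp
    | tmul x y => simp [mul_comm]
    | add x y hx hy => simp only [map_add, hx, hy]
  have TQ : T ∘ₗ Q = 0 := by
    ext c
    rw [LinearMap.comp_apply, hT, l, ← LinearMap.comp_apply (TensorProduct.map _ _) (TensorProduct.map _ _),
      ← TensorProduct.map_comp, tq]
    simp
  have QT : Q ∘ₗ T = 0 := by
    ext c
    rw [LinearMap.comp_apply, hQ', lT, ← LinearMap.comp_apply (TensorProduct.map _ _) (TensorProduct.map _ _),
      ← TensorProduct.map_comp, st]
    simp
  constructor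
  · intro c
    rw [r, ← LinearMap.comp_apply (TensorProduct.map _ _) (TensorProduct.map _ _),
      ← LinearMap.comp_apply (TensorProduct.map _ _) (TensorProduct.map _ _),
      ← TensorProduct.map_comp, ← TensorProduct.map_comp, TQ]
    simp
  · intro c
    rw [lT, ← LinearMap.comp_apply (TensorProduct.map _ _) (TensorProduct.map _ _),
      ← LinearMap.comp_apply (TensorProduct.map _ _) (TensorProduct.map _ _),
      ← TensorProduct.map_comp, ← TensorProduct.map_comp, QT]
    simp

end
end

section
/- Let (C, Q, T) be a Rota-Baxter cosystem over a field K. Define Δ_* : C → C ⊗ C by Δ_*(c) = Q(c₁) ⊗ c₂ + c₁ ⊗ T(c₂). Then Δ_* is coassociative: (Δ_* ⊗ id)∘Δ_* = (id ⊗ Δ_*)∘Δ_*, so (C, Δ_*) is a coassociative coalgebra. -/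
open TensorProduct

noncomputable section

variable {K : Type*} [Field K] {C : Type*} [AddCommGroup C] [Module K C]

/-- For a Rota-Baxter cosystem `(C, Q, T)`, the comultiplication
`Δ_*(c) = Q(c₁) ⊗ c₂ + c₁ ⊗ T(c₂)` is coassociative. -/
theorem star_comultiplication_coassociative
    (Δ : C →ₗ[K] C ⊗[K] C) (hΔ : Coassoc Δ) (Q T : C →ₗ[K] C)
    (h : IsRBCosystem Δ Q T) :
    Coassoc (TensorProduct.map Q LinearMap.id ∘ₗ Δ +
      TensorProduct.map LinearMap.id T ∘ₗ Δ) := by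
  obtain ⟨hQ, hT⟩ := h
  set D : C →ₗ[K] C ⊗[K] C := TensorProduct.map Q LinearMap.id ∘ₗ Δ +
      TensorProduct.map LinearMap.id T ∘ₗ Δ with hD
  have h1 : D ∘ₗ Q = TensorProduct.map Q Q ∘ₗ Δ := by
    ext c; simp [hD, hQ]
  have h2 : D ∘ₗ T = TensorProduct.map T T ∘ₗ Δ := by
    ext c; simp [hD, hT]
  have L : ∀ (f g k : C →ₗ[K] C) (t : C ⊗[K] C),
      (TensorProduct.assoc K C C C) (TensorProduct.map (TensorProduct.map f g ∘ₗ Δ) k t) =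
      TensorProduct.map f (TensorProduct.map g k)
        ((TensorProduct.assoc K C C C) (TensorProduct.map Δ LinearMap.id t)) := by
    intro f g k t
    rw [TensorProduct.map_map_assoc, TensorProduct.map_map, LinearMap.comp_id]
  have R : ∀ (f g k : C →ₗ[K] C) (t : C ⊗[K] C),
      TensorProduct.map f (TensorProduct.map g k ∘ₗ Δ) t =
      TensorProduct.map f (TensorProduct.map g k)
        (TensorProduct.map LinearMap.id Δ t) := by
    intro f g k t
    rw [TensorProduct.map_map, LinearMap.comp_id]
  intro c
  have e1 : D c = TensorProduct.map Q LinearMap.id (Δ c) +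
      TensorProduct.map LinearMap.id T (Δ c) := by simp [hD]
  have a1 : TensorProduct.map D LinearMap.id (TensorProduct.map Q LinearMap.id (Δ c)) =
      TensorProduct.map (TensorProduct.map Q Q ∘ₗ Δ) LinearMap.id (Δ c) := by
    rw [TensorProduct.map_map, h1, LinearMap.comp_id]
  have a2 : TensorProduct.map D LinearMap.id (TensorProduct.map LinearMap.id T (Δ c)) =
      TensorProduct.map (TensorProduct.map Q LinearMap.id ∘ₗ Δ) T (Δ c) +
      TensorProduct.map (TensorProduct.map LinearMap.id T ∘ₗ Δ) T (Δ c) := by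
    rw [TensorProduct.map_map, LinearMap.comp_id, LinearMap.id_comp,
      hD, TensorProduct.map_add_left, LinearMap.add_apply]
  have b1 : TensorProduct.map LinearMap.id D (TensorProduct.map LinearMap.id T (Δ c)) =
      TensorProduct.map LinearMap.id (TensorProduct.map T T ∘ₗ Δ) (Δ c) := by
    rw [TensorProduct.map_map, h2, LinearMap.comp_id]
  have b2 : TensorProduct.map LinearMap.id D (TensorProduct.map Q LinearMap.id (Δ c)) =
      TensorProduct.map Q (TensorProduct.map Q LinearMap.id ∘ₗ Δ) (Δ c) +
      TensorProduct.map Q (TensorProduct.map LinearMap.id T ∘ₗ Δ) (Δ c) := by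
    rw [TensorProduct.map_map, LinearMap.comp_id, LinearMap.id_comp,
      hD, TensorProduct.map_add_right, LinearMap.add_apply]
  rw [e1, map_add, map_add, map_add, a1, a2, b1, b2, map_add, L, L, L, R, R, R, hΔ c]
  abel

end
end

section
/- Let (C, Q, T) be a Rota-Baxter cosystem over a field K. Define Δ_• : C → C ⊗ C by Δ_•(c) = Q(c₁) ⊗ c₂ − T(c₂) ⊗ c₁. Then (C, Δ_•) is a pre-Lie coalgebra, i.e. the map Δ_C := (Δ_• ⊗ id)∘Δ_• − (id ⊗ Δ_•)∘Δ_• satisfies Δ_C = Φ₍₁₂₎∘Δ_C, where Φ₍₁₂₎ : C⊗C⊗C → C⊗C⊗C is the linear map with Φ₍₁₂₎(x ⊗ y ⊗ z) = y ⊗ x ⊗ z. -/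
open TensorProduct

noncomputable section

variable {K : Type*} [Field K] {C : Type*} [AddCommGroup C] [Module K C]

def rr : C ⊗[K] (C ⊗[K] C) →ₗ[K] C ⊗[K] (C ⊗[K] C) :=
  TensorProduct.map LinearMap.id (TensorProduct.comm K C C).toLinearMap

theorem ss_t (x y z : C) : swapFirstTwo (K := K) (x ⊗ₜ (y ⊗ₜ z)) = y ⊗ₜ (x ⊗ₜ z) := by
  simp [swapFirstTwo]

theorem rr_t (x y z : C) : rr (K := K) (x ⊗ₜ (y ⊗ₜ z)) = x ⊗ₜ (z ⊗ₜ y) := by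
  simp [rr]

theorem ss_ss (t : C ⊗[K] (C ⊗[K] C)) : swapFirstTwo (swapFirstTwo t) = t := by
  induction t with
  | zero => simp
  | add a b ha hb => simp only [map_add, ha, hb]
  | tmul x u =>
    induction u with
    | zero => simp
    | add a b ha hb => simp only [map_add, tmul_add, ha, hb]
    | tmul y z => simp only [ss_t]

theorem braid (t : C ⊗[K] (C ⊗[K] C)) :
    rr (swapFirstTwo (rr t)) = swapFirstTwo (rr (swapFirstTwo t)) := by
  induction t with
  | zero => simp
  | add a b ha hb => simp only [map_add, ha, hb]
  | tmul x u =>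
    induction u with
    | zero => simp
    | add a b ha hb => simp only [map_add, tmul_add, ha, hb]
    | tmul y z => simp only [ss_t, rr_t]

theorem nat1 (X : C →ₗ[K] C ⊗[K] C) (t : C ⊗[K] C) :
    TensorProduct.assoc K C C C (TensorProduct.map
      ((TensorProduct.comm K C C).toLinearMap ∘ₗ X) LinearMap.id t) =
    swapFirstTwo (TensorProduct.assoc K C C C (TensorProduct.map X LinearMap.id t)) := by
  induction t with
  | zero => simp
  | add a b ha hb => simp only [map_add, ha, hb]
  | tmul x y =>
    simp only [map_tmul, LinearMap.comp_apply, LinearMap.id_apply, LinearEquiv.coe_coe]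
    induction X x with
    | zero => simp
    | add a b ha hb => simp only [map_add, add_tmul, ha, hb]
    | tmul u v => simp [ss_t]

theorem nat2 (X : C →ₗ[K] C ⊗[K] C) (t : C ⊗[K] C) :
    TensorProduct.map LinearMap.id ((TensorProduct.comm K C C).toLinearMap ∘ₗ X) t =
    rr (TensorProduct.map LinearMap.id X t) := by
  induction t with
  | zero => simp
  | add a b ha hb => simp only [map_add, ha, hb]
  | tmul x y => simp [rr]

theorem nat3 (X : C →ₗ[K] C ⊗[K] C) (t : C ⊗[K] C) :
    TensorProduct.assoc K C C C (TensorProduct.map X LinearMap.id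
      (TensorProduct.comm K C C t)) =
    rr (swapFirstTwo (TensorProduct.map LinearMap.id X t)) := by
  induction t with
  | zero => simp
  | add a b ha hb => simp only [map_add, ha, hb]
  | tmul x y =>
    simp only [map_tmul, comm_tmul, LinearMap.id_apply]
    induction X y with
    | zero => simp
    | add a b ha hb => simp only [map_add, add_tmul, tmul_add, ha, hb]
    | tmul u v => simp [ss_t, rr_t]

theorem nat4 (X : C →ₗ[K] C ⊗[K] C) (t : C ⊗[K] C) :
    TensorProduct.map LinearMap.id X (TensorProduct.comm K C C t) =
    swapFirstTwo (rr (TensorProduct.assoc K C C C (TensorProduct.map X LinearMap.id t))) := by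
  induction t with
  | zero => simp
  | add a b ha hb => simp only [map_add, ha, hb]
  | tmul x y =>
    simp only [map_tmul, comm_tmul, LinearMap.id_apply]
    induction X x with
    | zero => simp
    | add a b ha hb => simp only [map_add, add_tmul, tmul_add, ha, hb]
    | tmul u v => simp [ss_t, rr_t]

theorem assoc_map3 (f g k : C →ₗ[K] C) (X : C →ₗ[K] C ⊗[K] C) (t : C ⊗[K] C) :
    TensorProduct.assoc K C C C (TensorProduct.map (TensorProduct.map f g ∘ₗ X) k t) =
    TensorProduct.map f (TensorProduct.map g k)
      (TensorProduct.assoc K C C C (TensorProduct.map X LinearMap.id t)) := by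
  induction t with
  | zero => simp
  | add a b ha hb => simp only [map_add, ha, hb]
  | tmul x y =>
    simp only [map_tmul, LinearMap.comp_apply, LinearMap.id_apply]
    induction X x with
    | zero => simp
    | add a b ha hb => simp only [map_add, add_tmul, ha, hb]
    | tmul u v => simp

theorem map_map3 (f g k : C →ₗ[K] C) (X : C →ₗ[K] C ⊗[K] C) (t : C ⊗[K] C) :
    TensorProduct.map f (TensorProduct.map g k ∘ₗ X) t =
    TensorProduct.map f (TensorProduct.map g k) (TensorProduct.map LinearMap.id X t) := by
  induction t with
  | zero => simp
  | add a b ha hb => simp only [map_add, ha, hb]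
  | tmul x y => simp

theorem msl (X Y : C →ₗ[K] C ⊗[K] C) (f : C →ₗ[K] C) :
    TensorProduct.map (X - Y) f = TensorProduct.map X f - TensorProduct.map Y f := by
  ext x y
  simp [sub_tmul]

theorem msr (X Y : C →ₗ[K] C ⊗[K] C) (f : C →ₗ[K] C) :
    TensorProduct.map f (X - Y) = TensorProduct.map f X - TensorProduct.map f Y := by
  ext x y
  simp [tmul_sub]

theorem mm {M N : Type*} [AddCommGroup M] [Module K M] [AddCommGroup N] [Module K N]
    (X : C →ₗ[K] M) (Y : C →ₗ[K] N) (f g : C →ₗ[K] C) (t : C ⊗[K] C) :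
    TensorProduct.map X Y (TensorProduct.map f g t) =
    TensorProduct.map (X ∘ₗ f) (Y ∘ₗ g) t := by
  rw [← LinearMap.comp_apply, ← TensorProduct.map_comp]

/-- For a Rota-Baxter cosystem `(C, Q, T)`, the comultiplication
`Δ_•(c) = Q(c₁) ⊗ c₂ − T(c₂) ⊗ c₁` makes `C` a pre-Lie coalgebra. -/
theorem bullet_comultiplication_preLie
    (Δ : C →ₗ[K] C ⊗[K] C) (hΔ : Coassoc Δ) (Q T : C →ₗ[K] C)
    (h : IsRBCosystem Δ Q T)
    (Δb : C →ₗ[K] C ⊗[K] C)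
    (hΔb : Δb = TensorProduct.map Q LinearMap.id ∘ₗ Δ -
      (TensorProduct.comm K C C).toLinearMap ∘ₗ TensorProduct.map LinearMap.id T ∘ₗ Δ)
    (ΔC : C →ₗ[K] C ⊗[K] (C ⊗[K] C))
    (hΔC : ΔC = (TensorProduct.assoc K C C C).toLinearMap ∘ₗ
        TensorProduct.map Δb LinearMap.id ∘ₗ Δb -
      TensorProduct.map LinearMap.id Δb ∘ₗ Δb) :
    ΔC = swapFirstTwo ∘ₗ ΔC := by
  obtain ⟨hQ, hT⟩ := h
  have hQ' : TensorProduct.map Q Q ∘ₗ Δ = TensorProduct.map Q LinearMap.id ∘ₗ Δ ∘ₗ Q +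
      TensorProduct.map LinearMap.id T ∘ₗ Δ ∘ₗ Q := LinearMap.ext hQ
  have hT' : TensorProduct.map T T ∘ₗ Δ = TensorProduct.map Q LinearMap.id ∘ₗ Δ ∘ₗ T +
      TensorProduct.map LinearMap.id T ∘ₗ Δ ∘ₗ T := LinearMap.ext hT
  obtain ⟨P, hP⟩ : ∃ P, P = TensorProduct.map Q LinearMap.id ∘ₗ Δ := ⟨_, rfl⟩
  obtain ⟨L, hL⟩ : ∃ L, L = TensorProduct.map LinearMap.id T ∘ₗ Δ := ⟨_, rfl⟩
  have hPc : ∀ c, P c = TensorProduct.map Q LinearMap.id (Δ c) := fun c => by rw [hP]; rfl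
  have hLc : ∀ c, L c = TensorProduct.map LinearMap.id T (Δ c) := fun c => by rw [hL]; rfl
  have e1 : ∀ c, TensorProduct.assoc K C C C (TensorProduct.map P LinearMap.id (P c)) +
      TensorProduct.assoc K C C C (TensorProduct.map L LinearMap.id (P c)) =
      TensorProduct.map LinearMap.id P (P c) := by
    intro c
    have : P ∘ₗ Q + L ∘ₗ Q = TensorProduct.map Q Q ∘ₗ Δ := by
      rw [hQ', hP, hL]; rfl
    rw [hPc c, mm, mm, mm, ← map_add, ← LinearMap.add_apply, ← TensorProduct.map_add_left, this]
    simp only [LinearMap.id_comp, LinearMap.comp_id]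
    rw [assoc_map3, hΔ c, hP, map_map3]
  have e2 : ∀ c, TensorProduct.assoc K C C C (TensorProduct.map P LinearMap.id (L c)) =
      TensorProduct.map LinearMap.id L (P c) := by
    intro c
    rw [hPc c, hLc c, mm, mm]
    simp only [LinearMap.id_comp, LinearMap.comp_id]
    rw [hP, hL, assoc_map3, hΔ c, map_map3]
  have e3 : ∀ c, TensorProduct.map LinearMap.id P (L c) +
      TensorProduct.map LinearMap.id L (L c) =
      TensorProduct.assoc K C C C (TensorProduct.map L LinearMap.id (L c)) := by
    intro c
    have : P ∘ₗ T + L ∘ₗ T = TensorProduct.map T T ∘ₗ Δ := by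
      rw [hT', hP, hL]; rfl
    rw [hLc c, mm, mm, mm, ← LinearMap.add_apply, ← TensorProduct.map_add_right, this]
    simp only [LinearMap.id_comp, LinearMap.comp_id]
    rw [map_map3, ← hΔ c, hL, assoc_map3]
  rw [← hP, ← hL] at hΔb
  subst hΔb hΔC
  ext1 c
  simp only [LinearMap.comp_apply, LinearMap.sub_apply, LinearEquiv.coe_coe,
    msl, msr, map_sub, nat1, nat2, nat3, nat4]
  simp only [← e1, ← e3, e2, map_add, braid, ss_ss]
  abel

end
end

section
/- Let (C, Q, T) be a Rota-Baxter cosystem over a field K. Define F : C⊗C → C⊗C by F(c ⊗ d) = Q(c) ⊗ d + c ⊗ T(d), and F̃ : C⊗C⊗C → C⊗C⊗C by F̃(c ⊗ d ⊗ e) = Q(c) ⊗ Q(d) ⊗ e + Q(c) ⊗ d ⊗ T(e) + c ⊗ T(d) ⊗ T(e). Then F̃∘(Δ ⊗ id) = (F ⊗ id)∘(Δ ⊗ id)∘F and F̃∘(id ⊗ Δ) = (id ⊗ F)∘(id ⊗ Δ)∘F; that is, F is a weak copseudotwistor with weak companion F̃. -/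
open TensorProduct

noncomputable section

variable {K : Type*} [Field K] {C : Type*} [AddCommGroup C] [Module K C]

/-- For a Rota-Baxter cosystem `(C, Q, T)`, the map
`F = Q ⊗ id + id ⊗ T` is a weak copseudotwistor with weak companion
`F̃ = Q⊗Q⊗id + Q⊗id⊗T + id⊗T⊗T`. -/
theorem weak_copseudotwistor_of_cosystem
    (Δ : C →ₗ[K] C ⊗[K] C) (hΔ : Coassoc Δ) (Q T : C →ₗ[K] C)
    (h : IsRBCosystem Δ Q T)
    (F : C ⊗[K] C →ₗ[K] C ⊗[K] C)
    (hF : F = TensorProduct.map Q LinearMap.id + TensorProduct.map LinearMap.id T)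
    (Ft : (C ⊗[K] C) ⊗[K] C →ₗ[K] (C ⊗[K] C) ⊗[K] C)
    (hFt : Ft = TensorProduct.map (TensorProduct.map Q Q) LinearMap.id +
      TensorProduct.map (TensorProduct.map Q LinearMap.id) T +
      TensorProduct.map (TensorProduct.map LinearMap.id T) T) :
    Ft ∘ₗ LinearMap.rTensor C Δ =
      LinearMap.rTensor C F ∘ₗ LinearMap.rTensor C Δ ∘ₗ F ∧
    Ft ∘ₗ ((TensorProduct.assoc K C C C).symm.toLinearMap ∘ₗ LinearMap.lTensor C Δ) =
      ((TensorProduct.assoc K C C C).symm.toLinearMap ∘ₗ LinearMap.lTensor C F ∘ₗ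
        (TensorProduct.assoc K C C C).toLinearMap) ∘ₗ
      ((TensorProduct.assoc K C C C).symm.toLinearMap ∘ₗ LinearMap.lTensor C Δ) ∘ₗ F := by
  subst hF hFt
  obtain ⟨h1, h2⟩ := h
  constructor
  · apply TensorProduct.ext'
    intro c d
    simp only [LinearMap.comp_apply, LinearMap.rTensor_tmul, LinearMap.add_apply,
      TensorProduct.map_tmul, LinearMap.id_apply, map_add, h1, TensorProduct.add_tmul]
    abel
  · apply TensorProduct.ext'
    intro c d
    have key : ∀ (f g k : C →ₗ[K] C) (w : C ⊗[K] C),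
        TensorProduct.map (TensorProduct.map f g) k
          ((TensorProduct.assoc K C C C).symm (c ⊗ₜ[K] w)) =
        (TensorProduct.assoc K C C C).symm (f c ⊗ₜ[K] TensorProduct.map g k w) := by
      intro f g k w
      induction w using TensorProduct.induction_on with
      | zero => simp
      | tmul x y => simp
      | add x y hx hy => simp only [TensorProduct.tmul_add, map_add, hx, hy]
    simp only [LinearMap.comp_apply, LinearMap.lTensor_tmul, LinearMap.add_apply,
      LinearEquiv.coe_coe, LinearEquiv.apply_symm_apply,
      TensorProduct.map_tmul, LinearMap.id_apply, map_add, key, h2, TensorProduct.tmul_add]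

end
end

section
/- Let (σ, τ) be a coassociative Yang-Baxter pair on a coalgebra C over a field K. Define Q, T : C → C by Q(c) = σ(c₁, c₃) c₂ and T(c) = τ(c₁, c₃) c₂ (where Δ²(c) = c₁ ⊗ c₂ ⊗ c₃). Then (C, Q, T) is a Rota-Baxter cosystem. -/
open TensorProduct

noncomputable section

variable {K : Type*} [Field K] {C : Type*} [AddCommGroup C] [Module K C]

/-- `EE Δ f c = c₁ ⊗ f c₂`. -/
def EE (Δ : C →ₗ[K] C ⊗[K] C) {M : Type*} [AddCommMonoid M] [Module K M] (f : C →ₗ[K] M) :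
    C →ₗ[K] C ⊗[K] M := LinearMap.lTensor C f ∘ₗ Δ

/-- Reassociation. -/
def RR (K C M : Type*) [Field K] [AddCommGroup C] [Module K C] [AddCommMonoid M] [Module K M] :
    C ⊗[K] (C ⊗[K] (C ⊗[K] M)) →ₗ[K] (C ⊗[K] (C ⊗[K] C)) ⊗[K] M :=
  (TensorProduct.assoc K C (C ⊗[K] C) M).symm.toLinearMap ∘ₗ
    LinearMap.lTensor C (TensorProduct.assoc K C C M).symm.toLinearMap

/-- `ctr σ (x ⊗ (m ⊗ z)) = σ x z • m`. -/
def ctr {M : Type*} [AddCommMonoid M] [Module K M] (σ : C →ₗ[K] C →ₗ[K] K) :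
    C ⊗[K] (M ⊗[K] C) →ₗ[K] M :=
  (TensorProduct.rid K M).toLinearMap ∘ₗ
    LinearMap.lTensor M (TensorProduct.lift σ) ∘ₗ
    (TensorProduct.leftComm K C M C).toLinearMap

section aux
variable {M N : Type*} [AddCommMonoid M] [Module K M] [AddCommMonoid N] [Module K N]

theorem ctr_tmul (σ : C →ₗ[K] C →ₗ[K] K) (x z : C) (m : M) :
    ctr σ (x ⊗ₜ[K] (m ⊗ₜ[K] z)) = σ x z • m := by
  simp [ctr]

theorem contract13_tmul (σ : C →ₗ[K] C →ₗ[K] K) (x y z : C) :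
    contract13 σ (x ⊗ₜ[K] (y ⊗ₜ[K] z)) = σ x z • y := by
  simp [contract13, swapFirstTwo]

theorem contract13_eq (σ : C →ₗ[K] C →ₗ[K] K) : contract13 σ = ctr σ := by
  ext x y z
  simp [contract13_tmul, ctr_tmul]

theorem ctr_nat (σ : C →ₗ[K] C →ₗ[K] K) (f : M →ₗ[K] N) (t : C ⊗[K] (M ⊗[K] C)) :
    f (ctr σ t) = ctr σ (LinearMap.lTensor C (LinearMap.rTensor C f) t) := by
  have : f ∘ₗ ctr σ = ctr σ ∘ₗ (LinearMap.lTensor C (LinearMap.rTensor C f)) := by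
    ext x m z
    simp [ctr_tmul]
  exact LinearMap.congr_fun this t

theorem RR_tmul (x y z : C) (m : M) :
    RR K C M (x ⊗ₜ (y ⊗ₜ (z ⊗ₜ m))) = (x ⊗ₜ (y ⊗ₜ z)) ⊗ₜ m := by
  simp [RR]

theorem lT_EE (Δ : C →ₗ[K] C ⊗[K] C) (g : M →ₗ[K] N) (f : C →ₗ[K] M) (c : C) :
    LinearMap.lTensor C g (EE Δ f c) = EE Δ (g ∘ₗ f) c := by
  simp [EE, LinearMap.lTensor_comp]

theorem rT_EE (Δ : C →ₗ[K] C ⊗[K] C) (hΔ : Coassoc Δ) (f : C →ₗ[K] M) (c : C) :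
    LinearMap.rTensor M Δ (EE Δ f c) = (TensorProduct.assoc K C C M).symm (EE Δ (EE Δ f) c) := by
  rw [LinearEquiv.eq_symm_apply]
  have h := hΔ c
  have h2 : ∀ t : C ⊗[K] C, TensorProduct.assoc K C C M (LinearMap.rTensor M Δ
      (LinearMap.lTensor C f t)) = LinearMap.lTensor C (LinearMap.lTensor C f)
        (TensorProduct.assoc K C C C (TensorProduct.map Δ LinearMap.id t)) := by
    intro t
    induction t with
    | zero => simp
    | add a b ha hb => simp only [map_add, ha, hb]
    | tmul x y =>
      simp only [LinearMap.lTensor_tmul, LinearMap.rTensor_tmul, TensorProduct.map_tmul,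
        LinearMap.id_apply]
      generalize Δ x = w
      induction w with
      | zero => simp
      | add a b ha hb => simp only [map_add, TensorProduct.add_tmul, ha, hb]
      | tmul u v => simp
  have h3 : EE Δ (EE Δ f) c = LinearMap.lTensor C (LinearMap.lTensor C f)
      (TensorProduct.map LinearMap.id Δ (Δ c)) := by
    rw [EE, EE, LinearMap.lTensor_comp]; rfl
  rw [h3, ← h, ← h2]; rfl

theorem rT_EE' (Δ : C →ₗ[K] C ⊗[K] C) (hΔ : Coassoc Δ) (f : C →ₗ[K] M) :
    LinearMap.rTensor M Δ ∘ₗ (EE Δ f) =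
      (TensorProduct.assoc K C C M).symm.toLinearMap ∘ₗ (EE Δ (EE Δ f)) :=
  LinearMap.ext (rT_EE Δ hΔ f)

theorem rT3_EE (Δ : C →ₗ[K] C ⊗[K] C) (hΔ : Coassoc Δ) (f : C →ₗ[K] M) :
    LinearMap.rTensor M (EE Δ Δ) ∘ₗ (EE Δ f) = RR K C M ∘ₗ (EE Δ (EE Δ (EE Δ f))) := by
  ext c
  have h1 : LinearMap.rTensor M (EE Δ Δ) (EE Δ f c) =
      LinearMap.rTensor M (LinearMap.lTensor C Δ) (LinearMap.rTensor M Δ (EE Δ f c)) := by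
    rw [EE, LinearMap.rTensor_comp]; rfl
  have h2 : ∀ t : C ⊗[K] (C ⊗[K] M), LinearMap.rTensor M (LinearMap.lTensor C Δ)
      ((TensorProduct.assoc K C C M).symm t) =
      (TensorProduct.assoc K C (C ⊗[K] C) M).symm
        (LinearMap.lTensor C (LinearMap.rTensor M Δ) t) := by
    intro t
    have : LinearMap.rTensor M (LinearMap.lTensor C Δ) ∘ₗ
      (TensorProduct.assoc K C C M).symm.toLinearMap =
      (TensorProduct.assoc K C (C ⊗[K] C) M).symm.toLinearMap ∘ₗ
        (LinearMap.lTensor C (LinearMap.rTensor M Δ)) := by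
      ext x y z; simp
    exact LinearMap.congr_fun this t
  rw [LinearMap.comp_apply, h1, rT_EE Δ hΔ, h2, lT_EE, rT_EE' Δ hΔ, ← lT_EE]
  rfl

/-- First term. -/
def F1 (ρ σ : C →ₗ[K] C →ₗ[K] K) :
    C ⊗[K] (C ⊗[K] (C ⊗[K] (C ⊗[K] (C ⊗[K] C)))) →ₗ[K] C ⊗[K] C :=
  LinearMap.rTensor C (contract13 σ) ∘ₗ ctr ρ ∘ₗ
    LinearMap.lTensor C ((TensorProduct.assoc K _ C C).symm.toLinearMap ∘ₗ RR K C (C ⊗[K] C))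

/-- Second term. -/
def F2 (ρ : C →ₗ[K] C →ₗ[K] K) :
    C ⊗[K] (C ⊗[K] (C ⊗[K] (C ⊗[K] (C ⊗[K] C)))) →ₗ[K] C ⊗[K] C :=
  TensorProduct.map (contract13 ρ) (contract13 ρ) ∘ₗ RR K C (C ⊗[K] (C ⊗[K] C))

/-- Third term. -/
def F3 (ρ τ : C →ₗ[K] C →ₗ[K] K) :
    C ⊗[K] (C ⊗[K] (C ⊗[K] (C ⊗[K] (C ⊗[K] C)))) →ₗ[K] C ⊗[K] C :=
  LinearMap.lTensor C (contract13 τ) ∘ₗ ctr ρ ∘ₗ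
    LinearMap.lTensor C ((TensorProduct.assoc K C _ C).symm.toLinearMap ∘ₗ
      LinearMap.lTensor C (RR K C C))

theorem F1_tmul (ρ σ : C →ₗ[K] C →ₗ[K] K) (a b c d e f : C) :
    F1 ρ σ (a ⊗ₜ (b ⊗ₜ (c ⊗ₜ (d ⊗ₜ (e ⊗ₜ f))))) = (ρ a f * σ b d) • (c ⊗ₜ[K] e) := by
  simp [F1, RR_tmul, ctr_tmul, contract13_tmul, TensorProduct.smul_tmul', smul_smul]

theorem F2_tmul (ρ : C →ₗ[K] C →ₗ[K] K) (a b c d e f : C) :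
    F2 ρ (a ⊗ₜ (b ⊗ₜ (c ⊗ₜ (d ⊗ₜ (e ⊗ₜ f))))) = (ρ a c * ρ d f) • (b ⊗ₜ[K] e) := by
  simp [F2, RR_tmul, contract13_tmul, TensorProduct.smul_tmul', smul_smul, mul_comm]

theorem F3_tmul (ρ τ : C →ₗ[K] C →ₗ[K] K) (a b c d e f : C) :
    F3 ρ τ (a ⊗ₜ (b ⊗ₜ (c ⊗ₜ (d ⊗ₜ (e ⊗ₜ f))))) = (τ c e * ρ a f) • (b ⊗ₜ[K] d) := by
  simp [F3, RR_tmul, ctr_tmul, contract13_tmul, smul_smul, mul_comm]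

theorem term1 (Δ : C →ₗ[K] C ⊗[K] C) (hΔ : Coassoc Δ) (ρ : C →ₗ[K] C →ₗ[K] K) (c : C) :
    Δ (contract13 ρ (EE Δ Δ c)) = ctr ρ
      (LinearMap.lTensor C (TensorProduct.assoc K C C C).symm.toLinearMap
        (EE Δ (EE Δ Δ) c)) := by
  rw [contract13_eq, ctr_nat, lT_EE, lT_EE]
  congr 3
  have := rT_EE' Δ hΔ (LinearMap.id : C →ₗ[K] C)
  have e : EE Δ (LinearMap.id : C →ₗ[K] C) = Δ := by simp [EE]
  rwa [e] at this

theorem term1' (Δ : C →ₗ[K] C ⊗[K] C) (hΔ : Coassoc Δ) (ρ σ : C →ₗ[K] C →ₗ[K] K) (c : C) :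
    TensorProduct.map (contract13 σ ∘ₗ EE Δ Δ) LinearMap.id (Δ (contract13 ρ (EE Δ Δ c))) =
      F1 ρ σ (EE Δ (EE Δ (EE Δ (EE Δ Δ))) c) := by
  rw [term1 Δ hΔ]
  change LinearMap.rTensor C _ _ = _
  rw [LinearMap.rTensor_comp, LinearMap.comp_apply, ctr_nat, lT_EE, lT_EE, F1,
    LinearMap.comp_apply, LinearMap.comp_apply, lT_EE, LinearMap.comp_assoc, ← rT3_EE Δ hΔ]
  congr 4
  rw [← LinearMap.comp_assoc, ← LinearMap.comp_assoc]
  congr 1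
  ext x y z; simp

theorem term3' (Δ : C →ₗ[K] C ⊗[K] C) (hΔ : Coassoc Δ) (ρ τ : C →ₗ[K] C →ₗ[K] K) (c : C) :
    TensorProduct.map LinearMap.id (contract13 τ ∘ₗ EE Δ Δ) (Δ (contract13 ρ (EE Δ Δ c))) =
      F3 ρ τ (EE Δ (EE Δ (EE Δ (EE Δ Δ))) c) := by
  rw [term1 Δ hΔ]
  change LinearMap.lTensor C _ _ = _
  have e : EE Δ (LinearMap.id : C →ₗ[K] C) = Δ := by simp [EE]
  have e2 := rT3_EE Δ hΔ (LinearMap.id : C →ₗ[K] C)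
  rw [e] at e2
  have e3 : LinearMap.lTensor C (RR K C C) ∘ₗ EE Δ (EE Δ (EE Δ Δ)) =
      LinearMap.lTensor C (LinearMap.rTensor C (EE Δ Δ)) ∘ₗ EE Δ Δ := by
    ext c
    rw [LinearMap.comp_apply, LinearMap.comp_apply, lT_EE, lT_EE, e2]
  rw [LinearMap.lTensor_comp, LinearMap.comp_apply, ctr_nat, lT_EE, lT_EE, F3,
    LinearMap.comp_apply, LinearMap.comp_apply, lT_EE, LinearMap.comp_assoc, e3]
  congr 4
  rw [← LinearMap.comp_assoc, ← LinearMap.comp_assoc]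
  congr 1
  ext x y z; simp

theorem term2' (Δ : C →ₗ[K] C ⊗[K] C) (hΔ : Coassoc Δ) (ρ : C →ₗ[K] C →ₗ[K] K) (c : C) :
    TensorProduct.map (contract13 ρ ∘ₗ EE Δ Δ) (contract13 ρ ∘ₗ EE Δ Δ) (Δ c) =
      F2 ρ (EE Δ (EE Δ (EE Δ (EE Δ Δ))) c) := by
  rw [F2, LinearMap.comp_apply, ← LinearMap.comp_apply (RR K C _), ← rT3_EE Δ hΔ,
    TensorProduct.map_comp, LinearMap.comp_apply, EE, EE]
  congr 1
  simp only [LinearMap.comp_apply]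
  rw [← LinearMap.comp_apply (LinearMap.rTensor _ _), LinearMap.rTensor_comp_lTensor]

theorem key (Δ : C →ₗ[K] C ⊗[K] C) (hΔ : Coassoc Δ) (ρ σ τ : C →ₗ[K] C →ₗ[K] K)
    (h : ∀ c d e : C, pairApply (ρ.flip e) (σ.flip d) (Δ c)
      - pairApply (ρ c) (ρ.flip e) (Δ d) + pairApply (τ d) (ρ c) (Δ e) = 0) (c : C) :
    F2 ρ (EE Δ (EE Δ (EE Δ (EE Δ Δ))) c) = F1 ρ σ (EE Δ (EE Δ (EE Δ (EE Δ Δ))) c) +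
      F3 ρ τ (EE Δ (EE Δ (EE Δ (EE Δ Δ))) c) := by
  have g1 : EE Δ (EE Δ (EE Δ (EE Δ Δ))) c = TensorProduct.assoc K C C _
      (LinearMap.rTensor _ Δ (EE Δ (EE Δ (EE Δ Δ)) c)) := by
    rw [rT_EE Δ hΔ]; simp
  have g2 : EE Δ (EE Δ (EE Δ (EE Δ Δ))) c = LinearMap.lTensor C (LinearMap.lTensor C
      ((TensorProduct.assoc K C C _).toLinearMap ∘ₗ (LinearMap.rTensor _ Δ)))
      (EE Δ (EE Δ (EE Δ Δ)) c) := by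
    rw [lT_EE]
    congr 2
    ext1 d
    rw [LinearMap.comp_apply, lT_EE]
    congr 2
    ext1 d
    simp [rT_EE Δ hΔ]
  have g3 : EE Δ (EE Δ (EE Δ (EE Δ Δ))) c = LinearMap.lTensor C (LinearMap.lTensor C
      (LinearMap.lTensor C (LinearMap.lTensor C Δ))) (EE Δ (EE Δ (EE Δ Δ)) c) := by
    rw [lT_EE]
    congr 2
    ext1 d
    rw [LinearMap.comp_apply, lT_EE]
    congr 2
    ext1 d
    rw [LinearMap.comp_apply, lT_EE]
    rfl
  have k1 : ∀ x u d v e : C, F1 ρ σ (TensorProduct.assoc K C C _ (Δ x ⊗ₜ (u ⊗ₜ (d ⊗ₜ (v ⊗ₜ e)))))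
      = pairApply (ρ.flip e) (σ.flip d) (Δ x) • (u ⊗ₜ[K] v) := by
    intro x u d v e
    generalize Δ x = w
    induction w with
    | zero => simp
    | add a b ha hb => simp only [map_add, TensorProduct.add_tmul, ha, hb, add_smul]
    | tmul a b => simp [F1_tmul, pairApply]
  have k2 : ∀ x u d v e : C, F2 ρ (x ⊗ₜ (u ⊗ₜ (TensorProduct.assoc K C C _ (Δ d ⊗ₜ (v ⊗ₜ e)))))
      = pairApply (ρ x) (ρ.flip e) (Δ d) • (u ⊗ₜ[K] v) := by
    intro x u d v e
    generalize Δ d = w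
    induction w with
    | zero => simp
    | add a b ha hb =>
      simp only [map_add, TensorProduct.add_tmul, TensorProduct.tmul_add, ha, hb, add_smul]
    | tmul a b => simp [F2_tmul, pairApply]
  have k3 : ∀ x u d v e : C, F3 ρ τ (x ⊗ₜ (u ⊗ₜ (d ⊗ₜ (v ⊗ₜ Δ e))))
      = pairApply (τ d) (ρ x) (Δ e) • (u ⊗ₜ[K] v) := by
    intro x u d v e
    generalize Δ e = w
    induction w with
    | zero => simp
    | add a b ha hb => simp only [map_add, TensorProduct.tmul_add, ha, hb, add_smul]
    | tmul a b => simp [F3_tmul, pairApply]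
  have main : F2 ρ ∘ₗ LinearMap.lTensor C (LinearMap.lTensor C
      ((TensorProduct.assoc K C C (C ⊗[K] C)).toLinearMap ∘ₗ (LinearMap.rTensor _ Δ))) =
      F1 ρ σ ∘ₗ (TensorProduct.assoc K C C _).toLinearMap ∘ₗ LinearMap.rTensor _ Δ +
      F3 ρ τ ∘ₗ LinearMap.lTensor C (LinearMap.lTensor C
        (LinearMap.lTensor C (LinearMap.lTensor C Δ))) := by
    ext x u d v e
    simp only [TensorProduct.AlgebraTensorModule.curry_apply, LinearMap.restrictScalars_self,
      TensorProduct.curry_apply, LinearMap.comp_apply, LinearMap.add_apply,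
      LinearMap.lTensor_tmul, LinearMap.rTensor_tmul, LinearEquiv.coe_coe, k1, k2, k3]
    rw [← add_smul]
    congr 1
    linear_combination -(h x d e)
  have := LinearMap.congr_fun main (EE Δ (EE Δ (EE Δ Δ)) c)
  rw [LinearMap.add_apply, LinearMap.comp_apply, LinearMap.comp_apply, LinearMap.comp_apply,
    LinearMap.comp_apply, ← g2, ← g3, LinearEquiv.coe_coe, ← g1] at this
  exact this

end aux

/-- A coassociative Yang-Baxter pair `(σ, τ)` induces a Rota-Baxter
cosystem via `Q(c) = σ(c₁,c₃)c₂` and `T(c) = τ(c₁,c₃)c₂`. -/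
theorem cosystem_of_cybp
    (Δ : C →ₗ[K] C ⊗[K] C) (hΔ : Coassoc Δ)
    (σ τ : C →ₗ[K] C →ₗ[K] K) (h : IsCYBP Δ σ τ)
    (Q T : C →ₗ[K] C)
    (hQ : Q = contract13 σ ∘ₗ LinearMap.lTensor C Δ ∘ₗ Δ)
    (hT : T = contract13 τ ∘ₗ LinearMap.lTensor C Δ ∘ₗ Δ) :
    IsRBCosystem Δ Q T := by
  subst hQ hT
  refine ⟨fun c => ?_, fun c => ?_⟩
  · exact (term2' Δ hΔ σ c).trans ((key Δ hΔ σ σ τ h.1 c).trans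
      (congrArg₂ (· + ·) (term1' Δ hΔ σ σ c) (term3' Δ hΔ σ τ c)).symm)
  · exact (term2' Δ hΔ τ c).trans ((key Δ hΔ τ σ τ h.2 c).trans
      (congrArg₂ (· + ·) (term1' Δ hΔ τ σ c) (term3' Δ hΔ τ τ c)).symm)

end
end

section
/- Let C be a counital coalgebra over a field K (with counit ε) and let δ₁, δ₂ : C⊗C → C be coderivations (write c∗₁d = δ₁(c⊗d), c∗₂d = δ₂(c⊗d)). Then there exists an associative multiplication μ : C⊗C → C that is a covariant coderivation with respect to (δ₁, δ₂) if and only if there exists a bilinear form u : C × C → K such that, for all c, d, e ∈ C: (i) c∗₁d − c∗₂d = c₁ u(c₂, d) − u(c, d₁) d₂; (ii) (c∗₁d)∗₁e − c∗₁(d∗₁e) = u(d, e₁) (c∗₁e₂); (iii) u(c∗₁d, e) − u(c, d∗₁e) = u(d, e₁)u(c, e₂) − u(c, d₁)u(d₂, e). In this case μ is given by μ(c⊗d) = u(c, d₁)d₂ + c∗₁d = c₁u(c₂, d) + c∗₂d. -/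
open TensorProduct

noncomputable section

variable {K : Type*} [Field K] {C : Type*} [AddCommGroup C] [Module K C]

theorem aux_map_lid (f : C →ₗ[K] K) (g : C →ₗ[K] C) (t : C ⊗[K] C) :
    g (TensorProduct.lid K C (LinearMap.rTensor C f t)) =
      TensorProduct.lid K C (TensorProduct.map f g t) := by
  induction t using TensorProduct.induction_on with
  | zero => simp
  | tmul x y => simp
  | add x y hx hy => simp only [map_add, hx, hy]

theorem aux_lid_comp (f : C →ₗ[K] K) (g : C →ₗ[K] C) (t : C ⊗[K] C) :
    TensorProduct.lid K C (LinearMap.rTensor C f (LinearMap.rTensor C g t)) =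
      TensorProduct.lid K C (LinearMap.rTensor C (f ∘ₗ g) t) := by
  rw [LinearMap.rTensor_comp]; rfl

theorem aux_rid_comp (f : C →ₗ[K] K) (g : C →ₗ[K] C) (t : C ⊗[K] C) :
    TensorProduct.rid K C (LinearMap.lTensor C f (LinearMap.lTensor C g t)) =
      TensorProduct.rid K C (LinearMap.lTensor C (f ∘ₗ g) t) := by
  rw [LinearMap.lTensor_comp]; rfl

theorem aux_lid_lT (f : C →ₗ[K] K) (g : C →ₗ[K] C) (t : C ⊗[K] C) :
    TensorProduct.lid K C (LinearMap.rTensor C f (LinearMap.lTensor C g t)) =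
      TensorProduct.lid K C (TensorProduct.map f g t) := by
  induction t using TensorProduct.induction_on with
  | zero => simp
  | tmul x y => simp
  | add x y hx hy => simp only [map_add, hx, hy]

theorem aux_map_rid (f : C →ₗ[K] K) (g : C →ₗ[K] C) (t : C ⊗[K] C) :
    TensorProduct.rid K C (LinearMap.lTensor C f (LinearMap.rTensor C g t)) =
      g (TensorProduct.rid K C (LinearMap.lTensor C f t)) := by
  induction t using TensorProduct.induction_on with
  | zero => simp
  | tmul x y => simp
  | add x y hx hy => simp only [map_add, hx, hy]

theorem aux_pair (f g : C →ₗ[K] K) (t : C ⊗[K] C) :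
    g (TensorProduct.lid K C (LinearMap.rTensor C f t)) = pairApply f g t := by
  induction t using TensorProduct.induction_on with
  | zero => simp
  | tmul x y => simp [pairApply]
  | add x y hx hy => simp only [map_add, hx, hy]

theorem aux_coassoc_l (Δ : C →ₗ[K] C ⊗[K] C) (hΔ : Coassoc Δ) (f : C →ₗ[K] K) (d : C) :
    Δ (TensorProduct.lid K C (LinearMap.rTensor C f (Δ d))) =
      LinearMap.rTensor C ((TensorProduct.lid K C).toLinearMap ∘ₗ
        LinearMap.rTensor C f ∘ₗ Δ) (Δ d) := by
  have a1 : ∀ t : C ⊗[K] C, Δ (TensorProduct.lid K C (LinearMap.rTensor C f t)) =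
      TensorProduct.lid K (C ⊗[K] C) (LinearMap.rTensor (C ⊗[K] C) f
        (TensorProduct.map LinearMap.id Δ t)) := by
    intro t
    induction t using TensorProduct.induction_on with
    | zero => simp
    | tmul x y => simp
    | add x y hx hy => simp only [map_add, hx, hy]
  have a2 : ∀ (s : C ⊗[K] C) (z : C), TensorProduct.lid K (C ⊗[K] C)
      (LinearMap.rTensor (C ⊗[K] C) f (TensorProduct.assoc K C C C (s ⊗ₜ z))) =
      (TensorProduct.lid K C (LinearMap.rTensor C f s)) ⊗ₜ z := by
    intro s z
    induction s using TensorProduct.induction_on with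
    | zero => simp
    | tmul x y => simp [TensorProduct.smul_tmul']
    | add x y hx hy => simp only [map_add, hx, hy, TensorProduct.add_tmul]
  have a3 : ∀ t : C ⊗[K] C, TensorProduct.lid K (C ⊗[K] C)
      (LinearMap.rTensor (C ⊗[K] C) f
        (TensorProduct.assoc K C C C (TensorProduct.map Δ LinearMap.id t))) =
      LinearMap.rTensor C ((TensorProduct.lid K C).toLinearMap ∘ₗ
        LinearMap.rTensor C f ∘ₗ Δ) t := by
    intro t
    induction t using TensorProduct.induction_on with
    | zero => simp
    | tmul x y => simp [a2]
    | add x y hx hy => simp only [map_add, hx, hy]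
  rw [a1, ← hΔ, a3]

theorem aux_coassoc_r (Δ : C →ₗ[K] C ⊗[K] C) (hΔ : Coassoc Δ) (f : C →ₗ[K] K) (d : C) :
    Δ (TensorProduct.rid K C (LinearMap.lTensor C f (Δ d))) =
      LinearMap.lTensor C ((TensorProduct.rid K C).toLinearMap ∘ₗ
        LinearMap.lTensor C f ∘ₗ Δ) (Δ d) := by
  have a2 : ∀ (s : C ⊗[K] C) (z : C), TensorProduct.rid K (C ⊗[K] C)
      (LinearMap.lTensor (C ⊗[K] C) f ((TensorProduct.assoc K C C C).symm (z ⊗ₜ s))) =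
      z ⊗ₜ (TensorProduct.rid K C (LinearMap.lTensor C f s)) := by
    intro s z
    induction s using TensorProduct.induction_on with
    | zero => simp
    | tmul x y => simp
    | add x y hx hy => simp only [map_add, hx, hy, TensorProduct.tmul_add]
  have a1 : ∀ t : C ⊗[K] C, Δ (TensorProduct.rid K C (LinearMap.lTensor C f t)) =
      TensorProduct.rid K (C ⊗[K] C) (LinearMap.lTensor (C ⊗[K] C) f
        (TensorProduct.map Δ LinearMap.id t)) := by
    intro t
    induction t using TensorProduct.induction_on with
    | zero => simp
    | tmul x y => simp
    | add x y hx hy => simp only [map_add, hx, hy]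
  have a3 : ∀ t : C ⊗[K] C, TensorProduct.rid K (C ⊗[K] C)
      (LinearMap.lTensor (C ⊗[K] C) f
        ((TensorProduct.assoc K C C C).symm (TensorProduct.map LinearMap.id Δ t))) =
      LinearMap.lTensor C ((TensorProduct.rid K C).toLinearMap ∘ₗ
        LinearMap.lTensor C f ∘ₗ Δ) t := by
    intro t
    induction t using TensorProduct.induction_on with
    | zero => simp
    | tmul x y => simp [a2]
    | add x y hx hy => simp only [map_add, hx, hy]
  rw [a1, ← a3, ← hΔ, LinearEquiv.symm_apply_apply]

theorem aux_left_s10 (Δ : C →ₗ[K] C ⊗[K] C) (δ μ : C ⊗[K] C →ₗ[K] C) (u : C →ₗ[K] C →ₗ[K] K)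
    (hμ : ∀ c d : C, μ (c ⊗ₜ d) =
      TensorProduct.lid K C (LinearMap.rTensor C (u c) (Δ d)) + δ (c ⊗ₜ d)) (c d e : C) :
    μ (μ (c ⊗ₜ d) ⊗ₜ e) =
      TensorProduct.lid K C (LinearMap.rTensor C (u (μ (c ⊗ₜ d))) (Δ e)) +
      (TensorProduct.lid K C (TensorProduct.map (u c)
        (δ ∘ₗ (TensorProduct.mk K C C).flip e) (Δ d)) + δ (δ (c ⊗ₜ d) ⊗ₜ e)) := by
  rw [hμ (μ (c ⊗ₜ d)) e, ← aux_map_lid]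
  congr 1
  rw [hμ c d, TensorProduct.add_tmul, map_add]
  rfl

theorem aux_right_s10 (Δ : C →ₗ[K] C ⊗[K] C) (δ μ : C ⊗[K] C →ₗ[K] C) (u : C →ₗ[K] C →ₗ[K] K)
    (hμ : ∀ c d : C, μ (c ⊗ₜ d) =
      TensorProduct.lid K C (LinearMap.rTensor C (u c) (Δ d)) + δ (c ⊗ₜ d))
    (hc : ∀ c d : C, Δ (μ (c ⊗ₜ d)) =
      LinearMap.rTensor C (μ ∘ₗ TensorProduct.mk K C C c) (Δ d) +
      LinearMap.lTensor C (δ ∘ₗ (TensorProduct.mk K C C).flip d) (Δ c)) (c d e : C) :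
    μ (c ⊗ₜ μ (d ⊗ₜ e)) =
      (TensorProduct.lid K C (LinearMap.rTensor C (u c ∘ₗ μ ∘ₗ TensorProduct.mk K C C d) (Δ e)) +
      TensorProduct.lid K C (TensorProduct.map (u c)
        (δ ∘ₗ (TensorProduct.mk K C C).flip e) (Δ d))) +
      (TensorProduct.lid K C (TensorProduct.map (u d)
        (δ ∘ₗ TensorProduct.mk K C C c) (Δ e)) + δ (c ⊗ₜ δ (d ⊗ₜ e))) := by
  rw [hμ c (μ (d ⊗ₜ e)), hc, map_add, map_add, aux_lid_comp, aux_lid_lT, ← aux_map_lid (u d)]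
  congr 1
  rw [hμ d e, TensorProduct.tmul_add, map_add]
  rfl

/-- Difference of the two sides of condition (iii). -/
theorem aux_u (Δ : C →ₗ[K] C ⊗[K] C) (δ μ : C ⊗[K] C →ₗ[K] C) (u : C →ₗ[K] C →ₗ[K] K)
    (hμ : ∀ c d : C, μ (c ⊗ₜ d) =
      TensorProduct.lid K C (LinearMap.rTensor C (u c) (Δ d)) + δ (c ⊗ₜ d)) (c d e : C) :
    u (μ (c ⊗ₜ d)) e = u c (μ (d ⊗ₜ e)) ↔
      u (δ (c ⊗ₜ d)) e - u c (δ (d ⊗ₜ e)) =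
      pairApply (u d) (u c) (Δ e) - pairApply (u c) (u.flip e) (Δ d) := by
  rw [← aux_pair, ← aux_pair, hμ c d, hμ d e]
  simp only [map_add, LinearMap.add_apply, LinearMap.flip_apply]
  constructor <;> intro h <;> linear_combination h

theorem aux_forward (Δ : C →ₗ[K] C ⊗[K] C)
    (ε : C →ₗ[K] K) (hε : IsCounit Δ ε)
    (δ₁ δ₂ : C ⊗[K] C →ₗ[K] C) (μ : C ⊗[K] C →ₗ[K] C) (ha : IsAssocMul μ)
    (hc : IsCovariant Δ δ₁ δ₂ μ) :
    ∃ u : C →ₗ[K] C →ₗ[K] K, UCond Δ δ₁ δ₂ u ∧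
        ∀ c d : C,
          μ (c ⊗ₜ d) = (TensorProduct.lid K C) (LinearMap.rTensor C (u c) (Δ d)) +
            δ₁ (c ⊗ₜ d) ∧
          μ (c ⊗ₜ d) = (TensorProduct.rid K C) (LinearMap.lTensor C (u.flip d) (Δ c)) +
            δ₂ (c ⊗ₜ d) := by
  have hl : ∀ c, TensorProduct.lid K C (LinearMap.rTensor C ε (Δ c)) = c := fun c => (hε c).1
  have hr : ∀ c, TensorProduct.rid K C (LinearMap.lTensor C ε (Δ c)) = c := fun c => (hε c).2
  obtain ⟨u, hu⟩ : ∃ u : C →ₗ[K] C →ₗ[K] K, u = TensorProduct.curry (ε ∘ₗ μ) := ⟨_, rfl⟩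
  have m1 : ∀ c d : C, μ (c ⊗ₜ d) =
      TensorProduct.lid K C (LinearMap.rTensor C (u c) (Δ d)) + δ₁ (c ⊗ₜ d) := by
    intro c d
    have := hl (μ (c ⊗ₜ d))
    rw [hc.1, map_add, map_add, aux_lid_comp, aux_lid_lT, ← aux_map_lid, hl] at this
    rw [← this, hu]
    rfl
  have m2 : ∀ c d : C, μ (c ⊗ₜ d) =
      TensorProduct.rid K C (LinearMap.lTensor C (u.flip d) (Δ c)) + δ₂ (c ⊗ₜ d) := by
    intro c d
    have := hr (μ (c ⊗ₜ d))
    rw [hc.2, map_add, map_add, aux_rid_comp, aux_map_rid, hr] at this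
    rw [← this, hu]
    rfl
  have hau : ∀ c d e, u (μ (c ⊗ₜ d)) e = u c (μ (d ⊗ₜ e)) := by
    intro c d e
    rw [hu]
    exact congrArg ε (ha c d e)
  refine ⟨u, ⟨?_, ?_, ?_⟩, fun c d => ⟨m1 c d, m2 c d⟩⟩
  · intro c d
    have := (m1 c d).symm.trans (m2 c d)
    rw [sub_eq_sub_iff_add_eq_add, add_comm, this]
  · intro c d e
    have := ha c d e
    rw [aux_left_s10 Δ δ₁ μ u m1, aux_right_s10 Δ δ₁ μ u m1 hc.1] at this
    have h3 : u (μ (c ⊗ₜ d)) = u c ∘ₗ μ ∘ₗ TensorProduct.mk K C C d :=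
      LinearMap.ext fun e => hau c d e
    rw [h3, add_assoc, add_right_inj, add_right_inj] at this
    rw [this, add_sub_cancel_right]
  · intro c d e
    exact (aux_u Δ δ₁ μ u m1 c d e).1 (hau c d e)

theorem aux_backward (Δ : C →ₗ[K] C ⊗[K] C) (hΔ : Coassoc Δ)
    (δ₁ δ₂ : C ⊗[K] C →ₗ[K] C)
    (h1 : IsCoderivation Δ δ₁) (h2 : IsCoderivation Δ δ₂)
    (u : C →ₗ[K] C →ₗ[K] K) (hu : UCond Δ δ₁ δ₂ u) :
    ∃ μ : C ⊗[K] C →ₗ[K] C, IsAssocMul μ ∧ IsCovariant Δ δ₁ δ₂ μ := by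
  obtain ⟨μ, m1⟩ : ∃ μ : C ⊗[K] C →ₗ[K] C, ∀ c d : C, μ (c ⊗ₜ d) =
      TensorProduct.lid K C (LinearMap.rTensor C (u c) (Δ d)) + δ₁ (c ⊗ₜ d) := by
    refine ⟨δ₁ - muForm Δ 0 u, fun c d => ?_⟩
    have key : ∀ t : C ⊗[K] C, TensorProduct.lid K C (LinearMap.rTensor C (TensorProduct.lift u)
      ((TensorProduct.assoc K C C C).symm (c ⊗ₜ t))) =
        TensorProduct.lid K C (LinearMap.rTensor C (u c) t) := by
      intro t
      induction t using TensorProduct.induction_on with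
      | zero => simp
      | tmul x y => simp
      | add x y hx hy => simp only [map_add, hx, hy, TensorProduct.tmul_add]
    have l0 : TensorProduct.lift (0 : C →ₗ[K] C →ₗ[K] K) = 0 := by ext; simp
    simp [muForm, key, l0, add_comm]
  have m2 : ∀ c d : C, μ (c ⊗ₜ d) =
      TensorProduct.rid K C (LinearMap.lTensor C (u.flip d) (Δ c)) + δ₂ (c ⊗ₜ d) := by
    intro c d
    have := hu.1 c d
    rw [sub_eq_sub_iff_add_eq_add] at this
    rw [m1, add_comm, this]
  have c1 : ∀ c d : C, Δ (μ (c ⊗ₜ d)) =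
      LinearMap.rTensor C (μ ∘ₗ TensorProduct.mk K C C c) (Δ d) +
      LinearMap.lTensor C (δ₁ ∘ₗ (TensorProduct.mk K C C).flip d) (Δ c) := by
    intro c d
    have e1 : μ ∘ₗ TensorProduct.mk K C C c = ((TensorProduct.lid K C).toLinearMap ∘ₗ
        LinearMap.rTensor C (u c) ∘ₗ Δ) + δ₁ ∘ₗ TensorProduct.mk K C C c :=
      LinearMap.ext fun d => m1 c d
    rw [m1, map_add, aux_coassoc_l Δ hΔ, h1, e1, LinearMap.rTensor_add, LinearMap.add_apply]
    abel
  have c2 : ∀ c d : C, Δ (μ (c ⊗ₜ d)) =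
      LinearMap.lTensor C (μ ∘ₗ (TensorProduct.mk K C C).flip d) (Δ c) +
      LinearMap.rTensor C (δ₂ ∘ₗ TensorProduct.mk K C C c) (Δ d) := by
    intro c d
    have e1 : μ ∘ₗ (TensorProduct.mk K C C).flip d = ((TensorProduct.rid K C).toLinearMap ∘ₗ
        LinearMap.lTensor C (u.flip d) ∘ₗ Δ) + δ₂ ∘ₗ (TensorProduct.mk K C C).flip d :=
      LinearMap.ext fun c => m2 c d
    rw [m2, map_add, aux_coassoc_r Δ hΔ, h2, e1, LinearMap.lTensor_add, LinearMap.add_apply]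
    abel
  refine ⟨μ, fun c d e => ?_, c1, c2⟩
  have h3 : u (μ (c ⊗ₜ d)) = u c ∘ₗ μ ∘ₗ TensorProduct.mk K C C d :=
    LinearMap.ext fun e => (aux_u Δ δ₁ μ u m1 c d e).2 (hu.2.2 c d e)
  rw [aux_left_s10 Δ δ₁ μ u m1, aux_right_s10 Δ δ₁ μ u m1 c1, h3, ← hu.2.1 c d e, sub_add_cancel,
    add_assoc]

/-- Theorem 4.11: existence of an associative covariant
coderivation `μ` w.r.t. `(δ₁, δ₂)` is equivalent to existence of a bilinear form
`u` satisfying (4.11)-(4.13); in this case `μ` is given by (4.14). -/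
theorem covariant_coderivation_iff_bilinear_form
    (Δ : C →ₗ[K] C ⊗[K] C) (hΔ : Coassoc Δ)
    (ε : C →ₗ[K] K) (hε : IsCounit Δ ε)
    (δ₁ δ₂ : C ⊗[K] C →ₗ[K] C)
    (h1 : IsCoderivation Δ δ₁) (h2 : IsCoderivation Δ δ₂) :
    ((∃ μ : C ⊗[K] C →ₗ[K] C, IsAssocMul μ ∧ IsCovariant Δ δ₁ δ₂ μ) ↔
      ∃ u : C →ₗ[K] C →ₗ[K] K, UCond Δ δ₁ δ₂ u) ∧
    (∀ μ : C ⊗[K] C →ₗ[K] C, IsAssocMul μ → IsCovariant Δ δ₁ δ₂ μ →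
      ∃ u : C →ₗ[K] C →ₗ[K] K, UCond Δ δ₁ δ₂ u ∧
        ∀ c d : C,
          μ (c ⊗ₜ d) = (TensorProduct.lid K C) (LinearMap.rTensor C (u c) (Δ d)) +
            δ₁ (c ⊗ₜ d) ∧
          μ (c ⊗ₜ d) = (TensorProduct.rid K C) (LinearMap.lTensor C (u.flip d) (Δ c)) +
            δ₂ (c ⊗ₜ d)) := by
  refine ⟨⟨?_, ?_⟩, aux_forward Δ ε hε δ₁ δ₂⟩
  · rintro ⟨μ, ha, hc⟩
    obtain ⟨u, hu, -⟩ := aux_forward Δ ε hε δ₁ δ₂ μ ha hc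
    exact ⟨u, hu⟩
  · rintro ⟨u, hu⟩
    exact aux_backward Δ hΔ δ₁ δ₂ h1 h2 u hu

end
end

section
/- Let C be a counital coalgebra over a field K (with counit ε), let δ₁, δ₂ : C⊗C → C be coderivations (write c∗₁d = δ₁(c⊗d), c∗₂d = δ₂(c⊗d)) and let μ : C⊗C → C be a linear map. Then (C, δ₁, δ₂, μ) is a counital covariant bialgebra if and only if, for all c, d, e ∈ C: (i) c∗₁d − c∗₂d = c ε(d) − ε(c) d; (ii) (c∗₁d)∗₁e − c∗₁(d∗₁e) = ε(d) (c∗₁e); and (iii) μ(c⊗d) = ε(c)d + c∗₁d. -/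
open TensorProduct

noncomputable section

variable {K : Type*} [Field K] {C : Type*} [AddCommGroup C] [Module K C]

theorem aux_ll (ε : C →ₗ[K] K) (f : C →ₗ[K] C) (x : C ⊗[K] C) :
    (TensorProduct.lid K C) (TensorProduct.map ε LinearMap.id (LinearMap.lTensor C f x)) =
      f ((TensorProduct.lid K C) (TensorProduct.map ε LinearMap.id x)) := by
  induction x with
  | zero => simp
  | tmul a b => simp
  | add a b ha hb => simp only [map_add, ha, hb]

theorem aux_rr (ε : C →ₗ[K] K) (f : C →ₗ[K] C) (x : C ⊗[K] C) :
    (TensorProduct.rid K C) (TensorProduct.map LinearMap.id ε (LinearMap.rTensor C f x)) =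
      f ((TensorProduct.rid K C) (TensorProduct.map LinearMap.id ε x)) := by
  induction x with
  | zero => simp
  | tmul a b => simp
  | add a b ha hb => simp only [map_add, ha, hb]

theorem aux_lr (ε : C →ₗ[K] K) (f : C →ₗ[K] C) (k : K) (h : ∀ a, ε (f a) = k * ε a)
    (x : C ⊗[K] C) :
    (TensorProduct.lid K C) (TensorProduct.map ε LinearMap.id (LinearMap.rTensor C f x)) =
      k • ((TensorProduct.lid K C) (TensorProduct.map ε LinearMap.id x)) := by
  induction x with
  | zero => simp
  | tmul a b => simp [h, mul_smul]
  | add a b ha hb => simp only [map_add, ha, hb, smul_add]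

theorem aux_rl (ε : C →ₗ[K] K) (f : C →ₗ[K] C) (k : K) (h : ∀ a, ε (f a) = k * ε a)
    (x : C ⊗[K] C) :
    (TensorProduct.rid K C) (TensorProduct.map LinearMap.id ε (LinearMap.lTensor C f x)) =
      k • ((TensorProduct.rid K C) (TensorProduct.map LinearMap.id ε x)) := by
  induction x with
  | zero => simp
  | tmul a b => simp [h, mul_smul]
  | add a b ha hb => simp only [map_add, ha, hb, smul_add]

theorem aux_swap (ε : C →ₗ[K] K) (x : C ⊗[K] C) :
    ε ((TensorProduct.lid K C) (TensorProduct.map ε LinearMap.id x)) =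
      ε ((TensorProduct.rid K C) (TensorProduct.map LinearMap.id ε x)) := by
  induction x with
  | zero => simp
  | tmul a b => simp [mul_comm]
  | add a b ha hb => simp only [map_add, ha, hb]

theorem aux_eps (Δ : C →ₗ[K] C ⊗[K] C) (ε : C →ₗ[K] K) (hε : IsCounit Δ ε)
    (δ : C ⊗[K] C →ₗ[K] C) (h : IsCoderivation Δ δ) (c d : C) : ε (δ (c ⊗ₜ d)) = 0 := by
  have e1 := (hε (δ (c ⊗ₜ d))).1
  rw [h, map_add, map_add, aux_ll, (hε c).1] at e1
  have e2 := congrArg ε e1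
  rw [map_add, aux_swap, aux_rr, (hε d).2] at e2
  simpa using e2

/-- Corollary 4.12: `(C, δ₁, δ₂, μ)` is a counital covariant
bialgebra iff (4.16), (4.17) and `cd = ε(c)d + c∗₁d` hold. -/
theorem counital_covariant_bialgebra_iff
    (Δ : C →ₗ[K] C ⊗[K] C) (hΔ : Coassoc Δ)
    (ε : C →ₗ[K] K) (hε : IsCounit Δ ε)
    (δ₁ δ₂ : C ⊗[K] C →ₗ[K] C)
    (h1 : IsCoderivation Δ δ₁) (h2 : IsCoderivation Δ δ₂)
    (μ : C ⊗[K] C →ₗ[K] C) :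
    (IsAssocMul μ ∧ IsCovariant Δ δ₁ δ₂ μ ∧
      (∀ c d : C, ε (μ (c ⊗ₜ d)) = ε c * ε d)) ↔
    ((∀ c d : C, δ₁ (c ⊗ₜ d) - δ₂ (c ⊗ₜ d) = ε d • c - ε c • d) ∧
     (∀ c d e : C, δ₁ (δ₁ (c ⊗ₜ d) ⊗ₜ e) - δ₁ (c ⊗ₜ δ₁ (d ⊗ₜ e)) =
        ε d • δ₁ (c ⊗ₜ e)) ∧
     (∀ c d : C, μ (c ⊗ₜ d) = ε c • d + δ₁ (c ⊗ₜ d))) := by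
  constructor
  · rintro ⟨ha, ⟨hc1, hc2⟩, he⟩
    have m1 : ∀ c d : C, μ (c ⊗ₜ d) = ε c • d + δ₁ (c ⊗ₜ d) := by
      intro c d
      have e1 := (hε (μ (c ⊗ₜ d))).1
      rw [hc1, map_add, map_add, aux_ll, (hε c).1,
        aux_lr ε _ (ε c) (fun a => by simpa using he c a), (hε d).1] at e1
      simpa using e1.symm
    have m2 : ∀ c d : C, μ (c ⊗ₜ d) = ε d • c + δ₂ (c ⊗ₜ d) := by
      intro c d
      have e1 := (hε (μ (c ⊗ₜ d))).2
      rw [hc2, map_add, map_add, aux_rr, (hε d).2,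
        aux_rl ε _ (ε d) (fun a => by simpa [mul_comm] using he a d), (hε c).2] at e1
      simpa using e1.symm
    refine ⟨fun c d => ?_, fun c d e => ?_, m1⟩
    · have := (m1 c d).symm.trans (m2 c d)
      rw [sub_eq_sub_iff_add_eq_add, add_comm, this]
    · have := ha c d e
      have z := aux_eps Δ ε hε δ₁ h1
      simp only [m1, map_add, map_smul, add_tmul, tmul_add, ← smul_tmul', tmul_smul, z, smul_eq_mul] at this
      linear_combination (norm := module) this
  · rintro ⟨hi, hii, m1⟩
    have z := aux_eps Δ ε hε δ₁ h1
    have m2 : ∀ c d : C, μ (c ⊗ₜ d) = ε d • c + δ₂ (c ⊗ₜ d) := by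
      intro c d
      have := hi c d
      rw [sub_eq_sub_iff_add_eq_add] at this
      rw [m1, add_comm, this]
    refine ⟨fun c d e => ?_, ⟨fun c d => ?_, fun c d => ?_⟩, fun c d => ?_⟩
    · have := hii c d e
      rw [sub_eq_iff_eq_add] at this
      simp only [m1, map_add, map_smul, add_tmul, tmul_add, ← smul_tmul', tmul_smul, z, smul_eq_mul, this]
      module
    · have : μ ∘ₗ TensorProduct.mk K C C c =
          ε c • LinearMap.id + δ₁ ∘ₗ TensorProduct.mk K C C c := by
        ext a; simp [m1]
      rw [this, m1, map_add, h1, LinearMap.rTensor_add, LinearMap.rTensor_smul]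
      simp
      abel
    · have : μ ∘ₗ (TensorProduct.mk K C C).flip d =
          ε d • LinearMap.id + δ₂ ∘ₗ (TensorProduct.mk K C C).flip d := by
        ext a; simp [m2]
      rw [this, m2, map_add, h2, LinearMap.lTensor_add, LinearMap.lTensor_smul]
      simp
      abel
    · simp [m1, z]

end
end

section
/- Let C be a coalgebra over a field K and let σ, τ : C × C → K be bilinear forms. Define δ_σ(c⊗d) = c₁σ(c₂, d) − σ(c, d₁)d₂, δ_τ(c⊗d) = c₁τ(c₂, d) − τ(c, d₁)d₂, and cd = μ(c⊗d) = c₁σ(c₂, d) − τ(c, d₁)d₂. Then (C, δ_σ, δ_τ, μ) is a coquasitriangular covariant bialgebra (i.e. (σ, τ) is a coassociative Yang-Baxter pair on C) if and only if, for all c, d, e ∈ C: σ(c, de) = σ(c₁, e)σ(c₂, d) and τ(cd, e) = −τ(d, e₁)τ(c, e₂), where de and cd denote μ(d⊗e) and μ(c⊗d). -/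
open TensorProduct

noncomputable section

variable {K : Type*} [Field K] {C : Type*} [AddCommGroup C] [Module K C]

theorem sigma_mu (Δ : C →ₗ[K] C ⊗[K] C) (σ τ : C →ₗ[K] C →ₗ[K] K) (f : C →ₗ[K] K) (d e : C) :
    f (muForm Δ σ τ (d ⊗ₜ e)) =
      pairApply f (σ.flip e) (Δ d) - pairApply (τ d) f (Δ e) := by
  have h1 : ∀ x : C ⊗[K] C, f ((TensorProduct.rid K C) (LinearMap.lTensor C (TensorProduct.lift σ)
      ((TensorProduct.assoc K C C C) (x ⊗ₜ[K] e)))) = pairApply f (σ.flip e) x := by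
    intro x
    induction x using TensorProduct.induction_on with
    | zero => simp
    | tmul a b => simp [pairApply, mul_comm]
    | add a b ha hb => simp only [TensorProduct.add_tmul, map_add, ha, hb]
  have h2 : ∀ x : C ⊗[K] C, f ((TensorProduct.lid K C) (LinearMap.rTensor C (TensorProduct.lift τ)
      ((TensorProduct.assoc K C C C).symm (d ⊗ₜ[K] x)))) = pairApply (τ d) f x := by
    intro x
    induction x using TensorProduct.induction_on with
    | zero => simp
    | tmul a b => simp [pairApply]
    | add a b ha hb => simp only [TensorProduct.tmul_add, map_add, ha, hb]
  rw [← h1, ← h2]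
  simp [muForm]

/-- Proposition 5.3: `(σ, τ)` is a coassociative Yang-Baxter pair
iff `σ(c, de) = σ(c₁,e)σ(c₂,d)` and `τ(cd, e) = −τ(d,e₁)τ(c,e₂)`. -/
theorem cybp_iff_multiplicativity
    (Δ : C →ₗ[K] C ⊗[K] C) (hΔ : Coassoc Δ)
    (σ τ : C →ₗ[K] C →ₗ[K] K) :
    IsCYBP Δ σ τ ↔
      ∀ c d e : C,
        σ c (muForm Δ σ τ (d ⊗ₜ e)) = pairApply (σ.flip e) (σ.flip d) (Δ c) ∧
        τ (muForm Δ σ τ (c ⊗ₜ d)) e = - pairApply (τ d) (τ c) (Δ e) := by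
  have hs : ∀ c d e : C, σ c (muForm Δ σ τ (d ⊗ₜ e)) =
      pairApply (σ c) (σ.flip e) (Δ d) - pairApply (τ d) (σ c) (Δ e) :=
    fun c d e => sigma_mu Δ σ τ (σ c) d e
  have ht : ∀ c d e : C, τ (muForm Δ σ τ (c ⊗ₜ d)) e =
      pairApply (τ.flip e) (σ.flip d) (Δ c) - pairApply (τ c) (τ.flip e) (Δ d) :=
    fun c d e => sigma_mu Δ σ τ (τ.flip e) c d
  constructor
  · rintro ⟨h1, h2⟩ c d e
    rw [hs, ht]
    exact ⟨by linear_combination -h1 c d e, by linear_combination h2 c d e⟩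
  · intro h
    refine ⟨fun c d e => ?_, fun c d e => ?_⟩
    · have := (h c d e).1
      rw [hs] at this
      linear_combination -this
    · have := (h c d e).2
      rw [ht] at this
      linear_combination this

end
end

section
/- Let C be a coalgebra over a field K, let σ : C × C → K be a bilinear form, and define the product cd = μ_σ(c⊗d) = c₁σ(c₂, d) − σ(c, d₁)d₂. Then σ is a solution of the coassociative Yang-Baxter equation, i.e. σ(c₁, e)σ(c₂, d) − σ(c, d₁)σ(d₂, e) + σ(d, e₁)σ(c, e₂) = 0 for all c, d, e ∈ C, if and only if, for all c, d, e ∈ C: σ(cd, e) = −σ(d, e₁)σ(c, e₂) and σ(c, de) = σ(c₁, e)σ(c₂, d). -/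
open TensorProduct

noncomputable section

variable {K : Type*} [Field K] {C : Type*} [AddCommGroup C] [Module K C]

/-- Proposition 5.11: `σ` is a solution of the coassociative
Yang-Baxter equation iff `σ(cd, e) = −σ(d,e₁)σ(c,e₂)` and
`σ(c, de) = σ(c₁,e)σ(c₂,d)`. -/
theorem cybe_iff_multiplicativity
    (Δ : C →ₗ[K] C ⊗[K] C) (hΔ : Coassoc Δ)
    (σ : C →ₗ[K] C →ₗ[K] K) :
    (∀ c d e : C, pairApply (σ.flip e) (σ.flip d) (Δ c)
        - pairApply (σ c) (σ.flip e) (Δ d) + pairApply (σ d) (σ c) (Δ e) = 0) ↔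
      ∀ c d e : C,
        σ (muForm Δ σ σ (c ⊗ₜ d)) e = - pairApply (σ d) (σ c) (Δ e) ∧
        σ c (muForm Δ σ σ (d ⊗ₜ e)) = pairApply (σ.flip e) (σ.flip d) (Δ c) := by
  have h1 : ∀ c d e : C, σ (muForm Δ σ σ (c ⊗ₜ d)) e =
      pairApply (σ.flip e) (σ.flip d) (Δ c) - pairApply (σ c) (σ.flip e) (Δ d) := by
    intro c d e
    simp only [muForm, LinearMap.sub_apply, map_sub, LinearMap.comp_apply,
      LinearMap.rTensor_tmul, LinearMap.lTensor_tmul]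
    congr 1
    · induction Δ c using TensorProduct.induction_on with
      | zero => simp
      | tmul x y => simp [pairApply, mul_comm]
      | add x y hx hy => simp only [TensorProduct.add_tmul, map_add, LinearMap.add_apply, hx, hy]
    · induction Δ d using TensorProduct.induction_on with
      | zero => simp
      | tmul x y => simp [pairApply]
      | add x y hx hy => simp only [TensorProduct.tmul_add, map_add, LinearMap.add_apply, hx, hy]
  have h2 : ∀ c d e : C, σ c (muForm Δ σ σ (d ⊗ₜ e)) =
      pairApply (σ c) (σ.flip e) (Δ d) - pairApply (σ d) (σ c) (Δ e) := by
    intro c d e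
    simp only [muForm, LinearMap.sub_apply, map_sub, LinearMap.comp_apply,
      LinearMap.rTensor_tmul, LinearMap.lTensor_tmul]
    congr 1
    · induction Δ d using TensorProduct.induction_on with
      | zero => simp
      | tmul x y => simp [pairApply, mul_comm]
      | add x y hx hy => simp only [TensorProduct.add_tmul, map_add, hx, hy]
    · induction Δ e using TensorProduct.induction_on with
      | zero => simp
      | tmul x y => simp [pairApply]
      | add x y hx hy => simp only [TensorProduct.tmul_add, map_add, hx, hy]
  constructor
  · intro h c d e
    rw [h1, h2]
    constructor
    · linear_combination h c d e
    · linear_combination -h c d e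
  · intro h c d e
    have := (h c d e).1
    rw [h1] at this
    linear_combination this

end
end
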